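/- (Sharp two-point tail) Let X₁, X₂ be independent uniform random points on the ellipsoid E = {(x₁,x₂,x₃) : x₁² + x₂² + x₃²/a² ≤ 1} with 0 < a < 1, and set W₁₂ = 2 − ‖X₁ − X₂‖. Then ε^{−7/2}·P(W₁₂ ≤ ε) → (9/(32π))·I_a as ε ↓ 0, where I_a = ∫_A 1{(s+s')/2 + τ²/4 − (a²/4)(y−y')² ≤ 1} ds ds' dy dy' dτ and A = {(s,s',y,y',τ) : s,s' ≥ 0, y² ≤ s, (y')² ≤ s'}. -/

import Mathlib

open Real MeasureTheory ProbabilityTheory Filter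

def Ell (a : ℝ) : Set (EuclideanSpace ℝ (Fin 3)) :=
  {x | x 0 ^ 2 + x 1 ^ 2 + x 2 ^ 2 / a ^ 2 ≤ 1}

noncomputable def unifE (a : ℝ) : Measure (EuclideanSpace ℝ (Fin 3)) :=
  (volume (Ell a))⁻¹ • volume.restrict (Ell a)

noncomputable def Gfun (a : ℝ) (p : ℝ × ℝ × ℝ × ℝ × ℝ) : ℝ :=
  (p.1 + p.2.1) / 2 + p.2.2.2.2 ^ 2 / 4 - a ^ 2 / 4 * (p.2.2.1 - p.2.2.2.1) ^ 2

def Aset : Set (ℝ × ℝ × ℝ × ℝ × ℝ) :=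
  {p | 0 ≤ p.1 ∧ 0 ≤ p.2.1 ∧ p.2.2.1 ^ 2 ≤ p.1 ∧ p.2.2.2.1 ^ 2 ≤ p.2.1}

open scoped ENNReal

theorem lintegral_euclideanSpace_fin_three (f : EuclideanSpace ℝ (Fin 3) → ℝ≥0∞)
    (hf : Measurable f) :
    ∫⁻ x, f x = ∫⁻ p : ℝ × ℝ, ∫⁻ z, f !₂[p.1, p.2, z] := by
  have hmeas : Measurable fun q : ℝ × ℝ × ℝ ↦ f !₂[q.2.1, q.2.2, q.1] := by
    refine hf.comp ?_
    refine (PiLp.volume_preserving_toLp (Fin 3)).measurable.comp ?_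
    refine measurable_pi_lambda _ fun i ↦ ?_
    fin_cases i <;> simp <;> fun_prop
  rw [← (PiLp.volume_preserving_toLp (Fin 3)).lintegral_comp hf,
    ← (volume_preserving_piFinSuccAbove (fun _ : Fin 3 ↦ ℝ) 2).symm.lintegral_comp_emb
      (MeasurableEquiv.measurableEmbedding _)]
  have hprod : MeasurePreserving ((MeasurableEquiv.refl ℝ).prodCongr
      (MeasurableEquiv.finTwoArrow (α := ℝ)).symm) volume volume :=
    (MeasurePreserving.id (volume : Measure ℝ)).prod (volume_preserving_finTwoArrow ℝ).symm
  rw [← hprod.lintegral_comp_emb (MeasurableEquiv.measurableEmbedding _)]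
  trans ∫⁻ q : ℝ × ℝ × ℝ, f !₂[q.2.1, q.2.2, q.1]
  · refine lintegral_congr fun q ↦ ?_
    congr 2
    ext i
    fin_cases i
    · rfl
    · rfl
    · rfl
  · rw [Measure.volume_eq_prod, lintegral_prod_symm' _ hmeas]

theorem lintegral_comp_const_mul {c : ℝ} (hc : 0 < c) (g : ℝ → ℝ≥0∞) (s : Set ℝ)
    (hs : MeasurableSet s) :
    ∫⁻ z in s, g z = ENNReal.ofReal c * ∫⁻ y in (fun y ↦ c * y) ⁻¹' s, g (c * y) := by
  have hm : Measurable fun y : ℝ ↦ c * y := by fun_prop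
  have h := lintegral_image_eq_lintegral_abs_deriv_mul (f := fun y ↦ c * y) (f' := fun _ ↦ c)
    (hm hs)
    (fun x _ ↦ by simpa using ((hasDerivAt_id x).const_mul c).hasDerivWithinAt)
    (mul_right_injective₀ hc.ne').injOn g
  rw [Set.image_preimage_eq _ (mul_left_surjective₀ hc.ne'), abs_of_pos hc,
    lintegral_const_mul' _ _ ENNReal.ofReal_ne_top] at h
  exact h

theorem lintegral_Ioi_mul_self {ε : ℝ} (hε : 0 < ε) (g : ℝ → ℝ≥0∞) :
    ∫⁻ r in Set.Ioi 0, ENNReal.ofReal r * g r =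
      ENNReal.ofReal (ε / 2) * ∫⁻ s in Set.Iio (1 / ε), g √(1 - ε * s) := by
  have himg : (fun r : ℝ ↦ (1 - r ^ 2) / ε) '' Set.Ioi 0 = Set.Iio (1 / ε) := by
    ext s
    simp only [Set.mem_image, Set.mem_Ioi, Set.mem_Iio]
    constructor
    · rintro ⟨r, hr, rfl⟩
      gcongr
      nlinarith
    · intro hs
      rw [lt_div_iff₀ hε] at hs
      refine ⟨√(1 - ε * s), Real.sqrt_pos.2 (by linarith), ?_⟩
      rw [Real.sq_sqrt (by linarith)]
      field_simp
      ring
  have h := lintegral_image_eq_lintegral_abs_deriv_mul (f := fun r ↦ (1 - r ^ 2) / ε)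
    (f' := fun r ↦ -(2 * r) / ε) (measurableSet_Ioi (a := (0 : ℝ)))
    (fun x _ ↦ by
      simpa using (((hasDerivAt_pow 2 x).const_sub 1).div_const ε).hasDerivWithinAt)
    (fun x hx y hy hxy ↦ by
      simp only [Set.mem_Ioi] at hx hy
      have h1 : (1 - x ^ 2) / ε = (1 - y ^ 2) / ε := hxy
      rw [div_left_inj' hε.ne'] at h1
      exact (pow_left_inj₀ hx.le hy.le two_ne_zero).1 (by linarith))
    (fun s ↦ g √(1 - ε * s))
  rw [himg] at h
  rw [h, ← lintegral_const_mul' _ _ ENNReal.ofReal_ne_top]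
  refine setLIntegral_congr_fun measurableSet_Ioi fun r hr ↦ ?_
  simp only [Set.mem_Ioi] at hr
  have h1 : 1 - ε * ((1 - r ^ 2) / ε) = r ^ 2 := by field_simp; ring
  rw [h1, Real.sqrt_sq hr.le, ← mul_assoc, ← ENNReal.ofReal_mul (by positivity), abs_div, abs_neg,
    abs_of_pos (by positivity : 0 < 2 * r), abs_of_pos hε]
  congr 2
  field_simp

/-- Rescaled cylindrical coordinates: `s` measures the depth below the unit cylinder in units of
`ε`, `y` is the height in units of `a √ε` and `θ` is the polar angle. -/
noncomputable def capPoint (a ε s y θ : ℝ) : EuclideanSpace ℝ (Fin 3) :=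
  !₂[√(1 - ε * s) * cos θ, √(1 - ε * s) * sin θ, a * √ε * y]

theorem lintegral_capPoint {a ε : ℝ} (ha : 0 < a) (hε : 0 < ε)
    (f : EuclideanSpace ℝ (Fin 3) → ℝ≥0∞) (hf : Measurable f) :
    ∫⁻ x, f x = ENNReal.ofReal (a * ε * √ε / 2) *
      ∫⁻ s in Set.Iio (1 / ε), ∫⁻ θ in Set.Ioo (-π) π, ∫⁻ y, f (capPoint a ε s y θ) := by
  have hsq : 0 < √ε := Real.sqrt_pos.2 hε
  have hmeas : Measurable fun q : (ℝ × ℝ) × ℝ ↦ f !₂[q.1.1, q.1.2, q.2] := by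
    refine hf.comp ?_
    refine (PiLp.volume_preserving_toLp (Fin 3)).measurable.comp ?_
    refine measurable_pi_lambda _ fun i ↦ ?_
    fin_cases i <;> simp <;> fun_prop
  have hF : Measurable fun p : ℝ × ℝ ↦ ∫⁻ z, f !₂[p.1, p.2, z] := hmeas.lintegral_prod_right'
  rw [lintegral_euclideanSpace_fin_three f hf, ← lintegral_comp_polarCoord_symm,
    polarCoord_target, Measure.volume_eq_prod, ← Measure.prod_restrict, lintegral_prod]
  · simp only [polarCoord_symm_apply, smul_eq_mul]
    have h1 : ∀ r : ℝ, ∫⁻ θ in Set.Ioo (-π) π, ENNReal.ofReal r *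
        ∫⁻ z, f !₂[r * cos θ, r * sin θ, z] = ENNReal.ofReal r *
        ∫⁻ θ in Set.Ioo (-π) π, ENNReal.ofReal (a * √ε) *
          ∫⁻ y, f !₂[r * cos θ, r * sin θ, a * √ε * y] := fun r ↦ by
      rw [lintegral_const_mul' _ _ ENNReal.ofReal_ne_top]
      congr 1
      refine lintegral_congr fun θ ↦ ?_
      have := lintegral_comp_const_mul (mul_pos ha hsq)
        (fun z ↦ f !₂[r * cos θ, r * sin θ, z]) Set.univ MeasurableSet.univ
      simpa using this
    simp_rw [h1, lintegral_const_mul' _ _ ENNReal.ofReal_ne_top]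
    rw [lintegral_Ioi_mul_self hε, lintegral_const_mul' _ _ ENNReal.ofReal_ne_top, ← mul_assoc,
      ← ENNReal.ofReal_mul (by positivity)]
    congr 2
    ring
  · refine Measurable.aemeasurable ?_
    simp only [polarCoord_symm_apply, smul_eq_mul]
    have hpol : Measurable fun q : ℝ × ℝ ↦ (q.1 * cos q.2, q.1 * sin q.2) := by fun_prop
    exact (ENNReal.measurable_ofReal.comp measurable_fst).mul (hF.comp hpol)

theorem lintegral_Ioo_comp_neg_cos_sub (K : ℝ → ℝ≥0∞) (θ : ℝ) :
    ∫⁻ t in Set.Ioo (-π) π, K (-cos (θ - t)) = ∫⁻ φ in Set.Ioo (-π) π, K (cos φ) := by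
  have h2π : (0 : ℝ) < 2 * π := by positivity
  have hIoc : ∀ F : ℝ → ℝ≥0∞, ∫⁻ t in Set.Ioo (-π) π, F t = ∫⁻ t in Set.Ioc (-π) π, F t :=
    fun F ↦ setLIntegral_congr Ioo_ae_eq_Ioc
  have hshift : ∫⁻ t in Set.Ioc (-π) π, K (-cos (θ - t)) =
      ∫⁻ φ in Set.Ioc (-π - (θ + π)) (-π - (θ + π) + 2 * π), K (cos φ) := by
    have hmp := (measurePreserving_add_right (volume : Measure ℝ) (θ + π))
    rw [← hmp.setLIntegral_comp_preimage_emb (MeasurableEquiv.addRight (θ + π)).measurableEmbedding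
      (fun t ↦ K (-cos (θ - t)))]
    have hset : (fun x ↦ x + (θ + π)) ⁻¹' Set.Ioc (-π) π =
        Set.Ioc (-π - (θ + π)) (-π - (θ + π) + 2 * π) := by
      ext x
      simp only [Set.mem_preimage, Set.mem_Ioc]
      constructor <;> rintro ⟨h1, h2⟩ <;> constructor <;> linarith
    rw [hset]
    refine lintegral_congr fun x ↦ ?_
    rw [show θ - (x + (θ + π)) = -(x + π) by ring, cos_neg, cos_add_pi, neg_neg]
  rw [hIoc, hIoc, hshift]
  have hend : Set.Ioc (-π) π = Set.Ioc (-π) (-π + 2 * π) := by congr 1; ring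
  rw [hend]
  refine (isAddFundamentalDomain_Ioc h2π (-π - (θ + π))).setLIntegral_eq
    (isAddFundamentalDomain_Ioc h2π (-π)) _ ?_
  rintro ⟨g, hg⟩ x
  obtain ⟨n, rfl⟩ := AddSubgroup.mem_zmultiples_iff.1 hg
  change K (cos (n • (2 * π) + x)) = K (cos x)
  rw [zsmul_eq_mul, add_comm, cos_add_int_mul_two_pi]

theorem lintegral_prod_five {μ₁ μ₂ μ₃ μ₄ μ₅ : Measure ℝ} [SFinite μ₁] [SFinite μ₂] [SFinite μ₃]
    [SFinite μ₄] [SFinite μ₅] (F : ℝ × ℝ × ℝ × ℝ × ℝ → ℝ≥0∞) (hF : Measurable F) :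
    ∫⁻ p, F p ∂(μ₁.prod (μ₂.prod (μ₃.prod (μ₄.prod μ₅)))) =
      ∫⁻ s, ∫⁻ y, ∫⁻ s', ∫⁻ τ, ∫⁻ y', F (s, s', y, y', τ) ∂μ₄ ∂μ₅ ∂μ₂ ∂μ₃ ∂μ₁ := by
  rw [lintegral_prod _ hF.aemeasurable]
  refine lintegral_congr fun s ↦ ?_
  have h1 : Measurable fun q : ℝ × ℝ × ℝ × ℝ ↦ F (s, q) := by fun_prop
  rw [lintegral_prod _ h1.aemeasurable]
  have h2 : ∀ s', ∫⁻ q, F (s, s', q) ∂(μ₃.prod (μ₄.prod μ₅)) =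
      ∫⁻ y, ∫⁻ τ, ∫⁻ y', F (s, s', y, y', τ) ∂μ₄ ∂μ₅ ∂μ₃ := fun s' ↦ by
    have h3 : Measurable fun q : ℝ × ℝ × ℝ ↦ F (s, s', q) := by fun_prop
    rw [lintegral_prod _ h3.aemeasurable]
    refine lintegral_congr fun y ↦ ?_
    have h4 : Measurable fun q : ℝ × ℝ ↦ F (s, s', y, q) := by fun_prop
    rw [lintegral_prod_symm _ h4.aemeasurable]
  simp_rw [h2]
  refine lintegral_lintegral_swap (Measurable.aemeasurable ?_)
  have h5 : Measurable fun q : ((ℝ × ℝ) × ℝ) × ℝ ↦ F (s, q.1.1.1, q.1.1.2, q.2, q.1.2) := by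
    fun_prop
  exact h5.lintegral_prod_right'.lintegral_prod_right'

/-- Squared distance between `capPoint a ε s y θ` and `capPoint a ε s' y' θ'` when
`c = -cos (θ - θ')`. -/
noncomputable def capDistSq (a ε s s' y y' c : ℝ) : ℝ :=
  (1 - ε * s) + (1 - ε * s') + 2 * (√(1 - ε * s) * √(1 - ε * s')) * c + a ^ 2 * ε * (y - y') ^ 2

theorem norm_capPoint_sub_sq {a ε s s' : ℝ} (hε : 0 < ε) (hs : s < 1 / ε) (hs' : s' < 1 / ε)
    (y y' θ θ' : ℝ) :
    ‖capPoint a ε s y θ - capPoint a ε s' y' θ'‖ ^ 2 =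
      capDistSq a ε s s' y y' (-cos (θ - θ')) := by
  rw [lt_div_iff₀ hε] at hs hs'
  have h1 := Real.sq_sqrt (show 0 ≤ 1 - ε * s by linarith)
  have h2 := Real.sq_sqrt (show 0 ≤ 1 - ε * s' by linarith)
  have h3 := Real.sq_sqrt hε.le
  rw [EuclideanSpace.real_norm_sq_eq, Fin.sum_univ_three, capDistSq, cos_sub]
  simp only [capPoint, PiLp.sub_apply, Matrix.cons_val]
  linear_combination √(1 - ε * s) ^ 2 * sin_sq_add_cos_sq θ +
    √(1 - ε * s') ^ 2 * sin_sq_add_cos_sq θ' + h1 + h2 + a ^ 2 * (y - y') ^ 2 * h3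

theorem capPoint_mem_Ell {a ε s : ℝ} (ha : 0 < a) (hε : 0 < ε) (hs : s < 1 / ε) (y θ : ℝ) :
    capPoint a ε s y θ ∈ Ell a ↔ y ^ 2 ≤ s := by
  rw [lt_div_iff₀ hε] at hs
  have h1 := Real.sq_sqrt (show 0 ≤ 1 - ε * s by linarith)
  have h3 := Real.sq_sqrt hε.le
  have key : (√(1 - ε * s) * cos θ) ^ 2 + (√(1 - ε * s) * sin θ) ^ 2 + (a * √ε * y) ^ 2 / a ^ 2 =
      1 + ε * (y ^ 2 - s) := by
    have : (a * √ε * y) ^ 2 / a ^ 2 = √ε ^ 2 * y ^ 2 := by field_simp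
    rw [this]
    linear_combination √(1 - ε * s) ^ 2 * sin_sq_add_cos_sq θ + h1 + y ^ 2 * h3
  have : capPoint a ε s y θ ∈ Ell a ↔ 1 + ε * (y ^ 2 - s) ≤ 1 := by
    rw [← key]
    rfl
  rw [this]
  constructor
  · intro h
    nlinarith
  · intro h
    nlinarith

theorem measurableSet_Ell (a : ℝ) : MeasurableSet (Ell a) := by
  unfold Ell
  exact measurableSet_le (by fun_prop) (by fun_prop)

/-- Pairs of points of the ellipsoid at distance at least `2 - ε`. -/
def farPairs (a ε : ℝ) : Set (EuclideanSpace ℝ (Fin 3) × EuclideanSpace ℝ (Fin 3)) :=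
  {q | q.1 ∈ Ell a ∧ q.2 ∈ Ell a ∧ 2 - ‖q.1 - q.2‖ ≤ ε}

theorem measurableSet_farPairs (a ε : ℝ) : MeasurableSet (farPairs a ε) := by
  have h : MeasurableSet {q : EuclideanSpace ℝ (Fin 3) × EuclideanSpace ℝ (Fin 3) |
      2 - ‖q.1 - q.2‖ ≤ ε} := measurableSet_le (by fun_prop) (by fun_prop)
  exact (measurable_fst (measurableSet_Ell a)).inter <|
    (measurable_snd (measurableSet_Ell a)).inter h

/-- The condition that two points of depths `s, s'` and heights `y, y'` lie in the ellipsoid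
at distance at least `2 - ε`; the last coordinate is as in `capDistSq`. -/
def farCoords (a ε : ℝ) : Set (ℝ × ℝ × ℝ × ℝ × ℝ) :=
  {p | p.2.2.1 ^ 2 ≤ p.1 ∧ p.2.2.2.1 ^ 2 ≤ p.2.1 ∧
    (2 - ε) ^ 2 ≤ capDistSq a ε p.1 p.2.1 p.2.2.1 p.2.2.2.1 p.2.2.2.2}

theorem measurableSet_farCoords (a ε : ℝ) : MeasurableSet (farCoords a ε) := by
  have h1 : MeasurableSet {p : ℝ × ℝ × ℝ × ℝ × ℝ | p.2.2.1 ^ 2 ≤ p.1} :=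
    measurableSet_le (by fun_prop) (by fun_prop)
  have h2 : MeasurableSet {p : ℝ × ℝ × ℝ × ℝ × ℝ | p.2.2.2.1 ^ 2 ≤ p.2.1} :=
    measurableSet_le (by fun_prop) (by fun_prop)
  have h3 : MeasurableSet {p : ℝ × ℝ × ℝ × ℝ × ℝ |
      (2 - ε) ^ 2 ≤ capDistSq a ε p.1 p.2.1 p.2.2.1 p.2.2.2.1 p.2.2.2.2} := by
    unfold capDistSq
    exact measurableSet_le (by fun_prop) (by fun_prop)
  exact h1.inter (h2.inter h3)

theorem capPoint_mem_farPairs {a ε s s' : ℝ} (ha : 0 < a) (hε : 0 < ε) (hε2 : ε < 2)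
    (hs : s < 1 / ε) (hs' : s' < 1 / ε) (y y' θ θ' : ℝ) :
    (capPoint a ε s y θ, capPoint a ε s' y' θ') ∈ farPairs a ε ↔
      (s, s', y, y', -cos (θ - θ')) ∈ farCoords a ε := by
  simp only [farPairs, farCoords, Set.mem_ofPred_eq, capPoint_mem_Ell ha hε hs,
    capPoint_mem_Ell ha hε hs', ← norm_capPoint_sub_sq hε hs hs']
  rw [pow_le_pow_iff_left₀ (by linarith) (norm_nonneg _) two_ne_zero, sub_le_comm]

/-- The rescaled region swept out by pairs at distance at least `2 - ε`. -/
def rescaledFar (a ε : ℝ) : Set (ℝ × ℝ × ℝ × ℝ × ℝ) :=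
  {p | (p.1, p.2.1, p.2.2.1, p.2.2.2.1, cos (√ε * p.2.2.2.2)) ∈ farCoords a ε} ∩
    Set.Iio (1 / ε) ×ˢ Set.Iio (1 / ε) ×ˢ Set.univ ×ˢ Set.univ ×ˢ
      ((fun τ ↦ √ε * τ) ⁻¹' Set.Ioo (-π) π)

theorem measurableSet_setOf_cos_mem_farCoords (a ε : ℝ) :
    MeasurableSet {p : ℝ × ℝ × ℝ × ℝ × ℝ |
      (p.1, p.2.1, p.2.2.1, p.2.2.2.1, cos (√ε * p.2.2.2.2)) ∈ farCoords a ε} := by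
  have h : Measurable fun p : ℝ × ℝ × ℝ × ℝ × ℝ ↦
    (p.1, p.2.1, p.2.2.1, p.2.2.2.1, cos (√ε * p.2.2.2.2)) := by fun_prop
  exact h (measurableSet_farCoords a ε)

theorem measurableSet_rescaledFar (a ε : ℝ) : MeasurableSet (rescaledFar a ε) := by
  have h : Measurable fun τ : ℝ ↦ √ε * τ := by fun_prop
  exact (measurableSet_setOf_cos_mem_farCoords a ε).inter <| measurableSet_Iio.prod <|
    measurableSet_Iio.prod <| MeasurableSet.univ.prod <| MeasurableSet.univ.prod <|
    h measurableSet_Ioo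

theorem volume_rescaledFar (a ε : ℝ) :
    volume (rescaledFar a ε) =
      ∫⁻ s in Set.Iio (1 / ε), ∫⁻ y, ∫⁻ s' in Set.Iio (1 / ε),
        ∫⁻ τ in (fun τ ↦ √ε * τ) ⁻¹' Set.Ioo (-π) π, ∫⁻ y',
          (farCoords a ε).indicator 1 (s, s', y, y', cos (√ε * τ)) := by
  have hQ := measurableSet_setOf_cos_mem_farCoords a ε
  rw [rescaledFar, ← Measure.restrict_apply hQ]
  simp only [Measure.volume_eq_prod, ← Measure.prod_restrict, Measure.restrict_univ]
  rw [← lintegral_indicator_one hQ, lintegral_prod_five _ (measurable_one.indicator hQ)]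
  rfl

theorem volume_farPairs {a ε : ℝ} (ha : 0 < a) (hε : 0 < ε) (hε2 : ε < 2) :
    (volume : Measure (EuclideanSpace ℝ (Fin 3))).prod volume (farPairs a ε) =
      ENNReal.ofReal (π / 2 * a ^ 2 * (ε ^ 3 * √ε)) * volume (rescaledFar a ε) := by
  have hT := measurableSet_farPairs a ε
  have hsq : 0 < √ε := Real.sqrt_pos.2 hε
  set C : ℝ≥0∞ := ENNReal.ofReal (a * ε * √ε / 2) with hC
  set K : ℝ → ℝ → ℝ → ℝ → ℝ≥0∞ := fun s s' y c ↦
    ∫⁻ y', (farCoords a ε).indicator 1 (s, s', y, y', c)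
  have hslice : ∀ s ∈ Set.Iio (1 / ε), ∀ θ y,
      volume (Prod.mk (capPoint a ε s y θ) ⁻¹' farPairs a ε) =
        C * ENNReal.ofReal √ε * ∫⁻ s' in Set.Iio (1 / ε),
          ∫⁻ τ in (fun τ ↦ √ε * τ) ⁻¹' Set.Ioo (-π) π, K s s' y (cos (√ε * τ)) := by
    intro s hs θ y
    have hm : MeasurableSet (Prod.mk (capPoint a ε s y θ) ⁻¹' farPairs a ε) :=
      measurable_prodMk_left hT
    rw [← lintegral_indicator_one hm, lintegral_capPoint ha hε _ (measurable_one.indicator hm),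
      mul_assoc C, ← lintegral_const_mul' (ENNReal.ofReal √ε) _ ENNReal.ofReal_ne_top]
    congr 1
    refine setLIntegral_congr_fun measurableSet_Iio fun s' hs' ↦ ?_
    rw [← lintegral_comp_const_mul hsq (fun φ ↦ K s s' y (cos φ)) _ measurableSet_Ioo,
      ← lintegral_Ioo_comp_neg_cos_sub _ θ]
    refine lintegral_congr fun θ' ↦ lintegral_congr fun y' ↦ ?_
    refine Set.indicator_const_eq_indicator_const ?_
    exact capPoint_mem_farPairs ha hε hε2 hs hs' y y' θ θ'
  rw [Measure.prod_apply hT, lintegral_capPoint ha hε _ (measurable_measure_prodMk_left hT),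
    volume_rescaledFar]
  have h1 : ∀ s ∈ Set.Iio (1 / ε), ∫⁻ θ in Set.Ioo (-π) π, ∫⁻ y,
      volume (Prod.mk (capPoint a ε s y θ) ⁻¹' farPairs a ε) =
      ENNReal.ofReal (2 * π) * (C * ENNReal.ofReal √ε) *
        ∫⁻ y, ∫⁻ s' in Set.Iio (1 / ε),
          ∫⁻ τ in (fun τ ↦ √ε * τ) ⁻¹' Set.Ioo (-π) π, K s s' y (cos (√ε * τ)) := by
    intro s hs
    simp_rw [hslice s hs]
    rw [setLIntegral_const, lintegral_const_mul' _ _ (by finiteness), Real.volume_Ioo,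
      show π - -π = 2 * π by ring]
    ring
  rw [setLIntegral_congr_fun (measurableSet_Iio (a := 1 / ε)) h1,
    lintegral_const_mul' _ _ (by finiteness),
    ← mul_assoc]
  congr 1
  rw [hC, ← ENNReal.ofReal_mul (by positivity), ← ENNReal.ofReal_mul (by positivity),
    ← ENNReal.ofReal_mul (by positivity)]
  congr 1
  have h3 := Real.sq_sqrt hε.le
  linear_combination π / 2 * a ^ 2 * ε ^ 2 * √ε * h3

theorem volume_Ell {a : ℝ} (ha : 0 < a) : volume (Ell a) = ENNReal.ofReal (4 / 3 * π * a) := by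
  have hE := measurableSet_Ell a
  have h1 : ∀ s ∈ Set.Iio (1 / (1 : ℝ)), ∫⁻ θ in Set.Ioo (-π) π, ∫⁻ y,
      (Ell a).indicator (1 : EuclideanSpace ℝ (Fin 3) → ℝ≥0∞) (capPoint a 1 s y θ) =
      ENNReal.ofReal (2 * π) * ENNReal.ofReal (2 * √s) := by
    intro s hs
    have h2 : ∀ θ, ∫⁻ y, (Ell a).indicator (1 : EuclideanSpace ℝ (Fin 3) → ℝ≥0∞) (capPoint a 1 s y θ) =
        ENNReal.ofReal (2 * √s) := by
      intro θ
      have h3 : ∀ y, (Ell a).indicator (1 : EuclideanSpace ℝ (Fin 3) → ℝ≥0∞) (capPoint a 1 s y θ) =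
          {y : ℝ | y ^ 2 ≤ s}.indicator 1 y := fun y ↦
        Set.indicator_const_eq_indicator_const (capPoint_mem_Ell ha one_pos hs y θ)
      simp_rw [h3]
      rw [lintegral_indicator_one (measurableSet_le (by fun_prop) (by fun_prop))]
      rcases le_or_gt 0 s with h | h
      · have : {y : ℝ | y ^ 2 ≤ s} = Set.Icc (-√s) √s := by
          ext y
          exact Real.sq_le h
        rw [this, Real.volume_Icc]
        congr 1
        ring
      · have : {y : ℝ | y ^ 2 ≤ s} = ∅ := by
          ext y
          simp only [Set.mem_ofPred_eq, Set.mem_empty_iff_false, iff_false, not_le]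
          exact h.trans_le (sq_nonneg y)
        rw [this, Real.sqrt_eq_zero_of_nonpos h.le]
        simp
    simp_rw [h2]
    rw [setLIntegral_const, Real.volume_Ioo, show π - -π = 2 * π by ring, mul_comm]
  have h4 : ∫⁻ s in Set.Iio (1 : ℝ), ENNReal.ofReal (2 * √s) = ENNReal.ofReal (4 / 3) := by
    have h5 : ∫⁻ s in Set.Iio (1 : ℝ), ENNReal.ofReal (2 * √s) =
        ∫⁻ s in Set.Ioc (0 : ℝ) 1, ENNReal.ofReal (2 * √s) := by
      rw [setLIntegral_congr Iio_ae_eq_Iic, ← lintegral_indicator measurableSet_Iic,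
        ← lintegral_indicator measurableSet_Ioc]
      refine lintegral_congr fun s ↦ ?_
      rcases le_or_gt s 0 with h | h
      · simp [Set.indicator_apply, Real.sqrt_eq_zero_of_nonpos h]
      · simp [Set.indicator_apply, h]
    have hint : IntervalIntegrable (fun s : ℝ ↦ 2 * √s) volume 0 1 :=
      (by fun_prop : Continuous fun s : ℝ ↦ 2 * √s).intervalIntegrable _ _
    rw [h5, ← ofReal_integral_eq_lintegral_ofReal
      ((intervalIntegrable_iff_integrableOn_Ioc_of_le zero_le_one).1 hint)
      (Eventually.of_forall fun s ↦ by positivity), ← intervalIntegral.integral_of_le zero_le_one]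
    congr 1
    simp_rw [Real.sqrt_eq_rpow]
    rw [intervalIntegral.integral_const_mul, integral_rpow (by norm_num)]
    norm_num
  rw [← lintegral_indicator_one hE, lintegral_capPoint ha one_pos _ (measurable_one.indicator hE),
    setLIntegral_congr_fun measurableSet_Iio h1, lintegral_const_mul' _ _ ENNReal.ofReal_ne_top,
    one_div_one, h4, ← ENNReal.ofReal_mul (by positivity), ← ENNReal.ofReal_mul (by positivity)]
  congr 1
  rw [Real.sqrt_one]
  ring

theorem tendsto_one_sub_cos_sqrt_div (τ : ℝ) :
    Tendsto (fun ε ↦ (1 - cos (√ε * τ)) / ε) (nhdsWithin 0 (Set.Ioi 0)) (nhds (τ ^ 2 / 2)) := by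
  have hd : HasDerivAt (fun t : ℝ ↦ sin (t * (τ / 2))) (τ / 2) 0 := by
    simpa using ((hasDerivAt_id (0 : ℝ)).mul_const (τ / 2)).sin
  have hs : Tendsto (fun ε : ℝ ↦ √ε) (nhdsWithin 0 (Set.Ioi 0)) (nhdsWithin 0 {0}ᶜ) := by
    refine tendsto_nhdsWithin_iff.2 ⟨?_, ?_⟩
    · simpa using (Real.continuous_sqrt.tendsto 0).mono_left nhdsWithin_le_nhds
    · filter_upwards [self_mem_nhdsWithin] with ε hε
      exact (Real.sqrt_pos.2 hε).ne'
  have h := (((hasDerivAt_iff_tendsto_slope_zero.1 hd).comp hs).pow 2).const_mul 2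
  rw [show τ ^ 2 / 2 = 2 * (τ / 2) ^ 2 by ring]
  refine h.congr' ?_
  filter_upwards [self_mem_nhdsWithin] with ε hε
  have hε' : (0 : ℝ) < ε := hε
  have h1 : cos (√ε * τ) = 1 - 2 * sin (√ε * (τ / 2)) ^ 2 := by
    rw [show √ε * τ = 2 * (√ε * (τ / 2)) by ring, cos_two_mul, cos_sq']
    ring
  simp only [Function.comp_apply, zero_add, zero_mul, sin_zero, sub_zero, smul_eq_mul]
  rw [h1, mul_pow, inv_pow, Real.sq_sqrt hε'.le]
  field_simp
  ring

theorem tendsto_one_sub_sqrt_mul_sqrt_div (s s' : ℝ) :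
    Tendsto (fun ε ↦ (1 - √(1 - ε * s) * √(1 - ε * s')) / ε) (nhdsWithin 0 (Set.Ioi 0))
      (nhds ((s + s') / 2)) := by
  have hroot : ∀ s : ℝ, HasDerivAt (fun ε : ℝ ↦ √(1 - ε * s)) (-s / 2) 0 := fun s ↦ by
    simpa using (((hasDerivAt_id (0 : ℝ)).mul_const s).const_sub 1).sqrt (by simp)
  have hd : HasDerivAt (fun ε : ℝ ↦ 1 - √(1 - ε * s) * √(1 - ε * s')) ((s + s') / 2) 0 := by
    refine (((hroot s).mul (hroot s')).const_sub 1).congr_deriv ?_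
    simp only [zero_mul, sub_zero, Real.sqrt_one]
    ring
  refine ((hasDerivAt_iff_tendsto_slope_zero.1 hd).mono_left
    (nhdsWithin_mono 0 fun x hx ↦ ne_of_gt hx)).congr fun ε ↦ ?_
  simp [div_eq_inv_mul]

theorem tendsto_four_sub_capDistSq_div (a s s' y y' τ : ℝ) :
    Tendsto (fun ε ↦ (4 - capDistSq a ε s s' y y' (cos (√ε * τ))) / ε)
      (nhdsWithin 0 (Set.Ioi 0)) (nhds (4 * Gfun a (s, s', y, y', τ))) := by
  have hsqrt : Tendsto (fun ε : ℝ ↦ √(1 - ε * s) * √(1 - ε * s')) (nhdsWithin 0 (Set.Ioi 0))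
      (nhds 1) := by
    have hc : Continuous fun ε : ℝ ↦ √(1 - ε * s) * √(1 - ε * s') := by fun_prop
    simpa using (hc.tendsto 0).mono_left nhdsWithin_le_nhds
  have h := (((tendsto_one_sub_sqrt_mul_sqrt_div s s').const_mul 2).add
    ((hsqrt.mul (tendsto_one_sub_cos_sqrt_div τ)).const_mul 2)).add_const
      (s + s' - a ^ 2 * (y - y') ^ 2)
  have hG : 4 * Gfun a (s, s', y, y', τ) =
      2 * ((s + s') / 2) + 2 * (1 * (τ ^ 2 / 2)) + (s + s' - a ^ 2 * (y - y') ^ 2) := by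
    simp only [Gfun]
    ring
  rw [hG]
  refine h.congr' ?_
  filter_upwards [self_mem_nhdsWithin] with ε hε
  have hε' : ε ≠ 0 := ne_of_gt hε
  simp only [capDistSq]
  field_simp
  ring

theorem capDistSq_cond_iff {a ε s s' y y' c : ℝ} (hε : 0 < ε) :
    (2 - ε) ^ 2 ≤ capDistSq a ε s s' y y' c ↔ (4 - capDistSq a ε s s' y y' c) / ε ≤ 4 - ε := by
  rw [div_le_iff₀ hε]
  constructor <;> intro h <;> nlinarith

theorem eventually_mem_rescaledFar_iff (a : ℝ) (p : ℝ × ℝ × ℝ × ℝ × ℝ) (hp : Gfun a p ≠ 1) :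
    ∀ᶠ ε in nhdsWithin 0 (Set.Ioi 0),
      p ∈ rescaledFar a ε ↔ p ∈ {p ∈ Aset | Gfun a p ≤ 1} := by
  obtain ⟨s, s', y, y', τ⟩ := p
  have hid : Tendsto (fun ε : ℝ ↦ ε) (nhdsWithin 0 (Set.Ioi 0)) (nhds 0) := nhdsWithin_le_nhds
  have hsmall : ∀ s : ℝ, ∀ᶠ ε in nhdsWithin 0 (Set.Ioi 0), s < 1 / ε := fun s ↦ by
    have : Tendsto (fun ε : ℝ ↦ s * ε) (nhdsWithin 0 (Set.Ioi 0)) (nhds 0) := by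
      simpa using hid.const_mul s
    filter_upwards [self_mem_nhdsWithin, this.eventually_lt_const one_pos] with ε hε h
    rwa [lt_div_iff₀ hε]
  have hangle : ∀ᶠ ε in nhdsWithin 0 (Set.Ioi 0), √ε * τ ∈ Set.Ioo (-π) π := by
    have hc : Continuous fun ε : ℝ ↦ √ε * τ := by fun_prop
    have : Tendsto (fun ε : ℝ ↦ √ε * τ) (nhdsWithin 0 (Set.Ioi 0)) (nhds 0) := by
      simpa using (hc.tendsto 0).mono_left nhdsWithin_le_nhds
    exact this.eventually (Ioo_mem_nhds (neg_lt_zero.2 pi_pos) pi_pos)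
  have hlim := (tendsto_four_sub_capDistSq_div a s s' y y' τ).add hid
  rw [add_zero] at hlim
  have hcond : ∀ᶠ ε in nhdsWithin 0 (Set.Ioi 0),
      (2 - ε) ^ 2 ≤ capDistSq a ε s s' y y' (cos (√ε * τ)) ↔ Gfun a (s, s', y, y', τ) ≤ 1 := by
    rcases lt_or_gt_of_ne hp with h | h
    · filter_upwards [self_mem_nhdsWithin,
        hlim.eventually_lt_const (show 4 * Gfun a (s, s', y, y', τ) < 4 by linarith)]
        with ε hε h1
      rw [capDistSq_cond_iff hε]
      exact ⟨fun _ ↦ h.le, fun _ ↦ by linarith⟩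
    · filter_upwards [self_mem_nhdsWithin,
        hlim.eventually_const_lt (show 4 < 4 * Gfun a (s, s', y, y', τ) by linarith)]
        with ε hε h1
      rw [capDistSq_cond_iff hε]
      exact ⟨fun _ ↦ by linarith, fun _ ↦ by linarith⟩
  filter_upwards [hsmall s, hsmall s', hangle, hcond] with ε h1 h2 h3 h4
  have h5 : (s, s', y, y', τ) ∈ rescaledFar a ε ↔
      (y ^ 2 ≤ s ∧ y' ^ 2 ≤ s' ∧ (2 - ε) ^ 2 ≤ capDistSq a ε s s' y y' (cos (√ε * τ))) ∧
      (s < 1 / ε ∧ s' < 1 / ε ∧ True ∧ True ∧ √ε * τ ∈ Set.Ioo (-π) π) := Iff.rfl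
  have h6 : (s, s', y, y', τ) ∈ Aset ∧ Gfun a (s, s', y, y', τ) ≤ 1 ↔
      (0 ≤ s ∧ 0 ≤ s' ∧ y ^ 2 ≤ s ∧ y' ^ 2 ≤ s') ∧ Gfun a (s, s', y, y', τ) ≤ 1 := Iff.rfl
  rw [h5, h6, h4]
  constructor
  · rintro ⟨⟨h7, h8, h9⟩, -⟩
    exact ⟨⟨(sq_nonneg y).trans h7, (sq_nonneg y').trans h8, h7, h8⟩, h9⟩
  · rintro ⟨⟨-, -, h7, h8⟩, h9⟩
    exact ⟨⟨h7, h8, h9⟩, h1, h2, trivial, trivial, h3⟩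

/-- A bounded region containing the rescaled regions for all small `ε`. -/
def rescaledBox (a : ℝ) : Set (ℝ × ℝ × ℝ × ℝ × ℝ) :=
  Set.Icc 0 (2 / (1 - a ^ 2)) ×ˢ Set.Icc 0 (2 / (1 - a ^ 2)) ×ˢ
    Set.Icc (-√(2 / (1 - a ^ 2))) √(2 / (1 - a ^ 2)) ×ˢ
    Set.Icc (-√(2 / (1 - a ^ 2))) √(2 / (1 - a ^ 2)) ×ˢ Set.Icc (-(2 * π)) (2 * π)

theorem rescaledFar_subset_rescaledBox {a ε : ℝ} (ha : 0 < a) (ha1 : a < 1) (hε : 0 < ε)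
    (hsmall : ε * (2 / (1 - a ^ 2)) ≤ 1 / 2) : rescaledFar a ε ⊆ rescaledBox a := by
  rintro ⟨s, s', y, y', τ⟩ ⟨⟨hy, hy', hD⟩, hs, hs', -, -, hτ⟩
  simp only [Set.mem_Iio, lt_div_iff₀ hε] at hs hs'
  simp only at hy hy' hD
  have ha2 : 0 < 1 - a ^ 2 := by nlinarith
  set M := 2 / (1 - a ^ 2) with hM
  have hMa : M * (1 - a ^ 2) = 2 := div_mul_cancel₀ _ ha2.ne'
  have hs0 : 0 ≤ s := (sq_nonneg y).trans hy
  have hs0' : 0 ≤ s' := (sq_nonneg y').trans hy'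
  set w := √(1 - ε * s) with hw
  set w' := √(1 - ε * s') with hw'
  have hw0 : 0 ≤ w := Real.sqrt_nonneg _
  have hw0' : 0 ≤ w' := Real.sqrt_nonneg _
  have hwsq : w ^ 2 = 1 - ε * s := Real.sq_sqrt (by linarith)
  have hwsq' : w' ^ 2 = 1 - ε * s' := Real.sq_sqrt (by linarith)
  have hcos : cos (√ε * τ) ≤ 1 - 2 / π ^ 2 * (ε * τ ^ 2) := by
    have := cos_le_one_sub_mul_cos_sq (x := √ε * τ) (abs_le.2 ⟨hτ.1.le, hτ.2.le⟩)
    rwa [mul_pow, Real.sq_sqrt hε.le] at this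
  have hww : 2 * (w * w') ≤ 2 - ε * (s + s') := by nlinarith [sq_nonneg (w - w')]
  have hyy : (y - y') ^ 2 ≤ 2 * (s + s') := by nlinarith [sq_nonneg (y + y')]
  have hDle : capDistSq a ε s s' y y' (cos (√ε * τ)) ≤
      4 - 2 * ε * (s + s') - 2 * (w * w') * (2 / π ^ 2 * (ε * τ ^ 2)) +
        2 * a ^ 2 * ε * (s + s') := by
    have h1 : 2 * (w * w') * cos (√ε * τ) ≤ 2 * (w * w') * (1 - 2 / π ^ 2 * (ε * τ ^ 2)) := by
      gcongr
    have h2 : a ^ 2 * ε * (y - y') ^ 2 ≤ a ^ 2 * ε * (2 * (s + s')) := by gcongr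
    simp only [capDistSq, ← hw, ← hw']
    linarith
  have hmain : (s + s') * (1 - a ^ 2) + w * w' * (2 / π ^ 2 * τ ^ 2) ≤ 2 := by
    have : ε * ((s + s') * (1 - a ^ 2) + w * w' * (2 / π ^ 2 * τ ^ 2)) ≤ ε * 2 := by
      nlinarith
    exact le_of_mul_le_mul_left this hε
  have hττ : 0 ≤ w * w' * (2 / π ^ 2 * τ ^ 2) := by positivity
  have hsum : s + s' ≤ M := by
    rw [hM, le_div_iff₀ ha2]
    linarith
  have hwhalf : 1 / 2 ≤ w * w' := by
    have h1 : 1 / 2 ≤ w ^ 2 := by nlinarith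
    have h2 : 1 / 2 ≤ w' ^ 2 := by nlinarith
    have h3 : (1 / 2) ^ 2 ≤ (w * w') ^ 2 := by
      rw [mul_pow]
      nlinarith
    exact (pow_le_pow_iff_left₀ (by norm_num) (by positivity) two_ne_zero).1 h3
  have hτ2 : τ ^ 2 ≤ (2 * π) ^ 2 := by
    have h1 : 1 / 2 * (2 / π ^ 2 * τ ^ 2) ≤ w * w' * (2 / π ^ 2 * τ ^ 2) := by gcongr
    have h2 : 0 ≤ (s + s') * (1 - a ^ 2) := by positivity
    have h3 : τ ^ 2 / π ^ 2 ≤ 2 := by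
      have : 1 / 2 * (2 / π ^ 2 * τ ^ 2) = τ ^ 2 / π ^ 2 := by ring
      linarith
    rw [div_le_iff₀ (by positivity)] at h3
    rw [mul_pow]
    linarith [sq_nonneg π]
  refine ⟨⟨hs0, by linarith⟩, ⟨hs0', by linarith⟩, ?_, ?_, ?_⟩
  · exact abs_le.1 (Real.abs_le_sqrt (by linarith))
  · exact abs_le.1 (Real.abs_le_sqrt (by linarith))
  · exact abs_le.1 (abs_le_of_sq_le_sq hτ2 (by positivity))

theorem measurableSet_rescaledBox (a : ℝ) : MeasurableSet (rescaledBox a) :=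
  measurableSet_Icc.prod <| measurableSet_Icc.prod <| measurableSet_Icc.prod <|
    measurableSet_Icc.prod measurableSet_Icc

theorem volume_rescaledBox_ne_top (a : ℝ) : volume (rescaledBox a) ≠ ∞ :=
  (isCompact_Icc.prod <| isCompact_Icc.prod <| isCompact_Icc.prod <|
    isCompact_Icc.prod isCompact_Icc).measure_ne_top

theorem ae_Gfun_ne_one (a : ℝ) : ∀ᵐ p : ℝ × ℝ × ℝ × ℝ × ℝ, Gfun a p ≠ 1 := by
  have hG : Measurable (Gfun a) := by
    unfold Gfun
    fun_prop
  have hm : MeasurableSet {p | Gfun a p = 1} := hG (measurableSet_singleton 1)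
  rw [ae_iff]
  simp only [not_not]
  rw [Measure.volume_eq_prod, Measure.prod_apply_symm hm, lintegral_eq_zero_of_ae_eq_zero]
  refine Eventually.of_forall fun q ↦ ?_
  refine Set.Subsingleton.measure_zero ?_ _
  intro s hs t ht
  simp only [Set.mem_preimage, Set.mem_ofPred_eq, Gfun] at hs ht
  linarith

theorem tendsto_volume_rescaledFar {a : ℝ} (ha : 0 < a) (ha1 : a < 1) :
    Tendsto (fun ε ↦ volume (rescaledFar a ε)) (nhdsWithin 0 (Set.Ioi 0))
      (nhds (volume {p ∈ Aset | Gfun a p ≤ 1})) ∧ volume {p ∈ Aset | Gfun a p ≤ 1} ≠ ∞ := by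
  have hsub : ∀ᶠ ε in nhdsWithin 0 (Set.Ioi 0), rescaledFar a ε ⊆ rescaledBox a := by
    have : Tendsto (fun ε : ℝ ↦ ε * (2 / (1 - a ^ 2))) (nhdsWithin 0 (Set.Ioi 0)) (nhds 0) := by
      have hid : Tendsto (fun ε : ℝ ↦ ε) (nhdsWithin 0 (Set.Ioi 0)) (nhds 0) :=
        nhdsWithin_le_nhds
      simpa using hid.mul_const (2 / (1 - a ^ 2))
    filter_upwards [self_mem_nhdsWithin, this.eventually_le_const one_half_pos] with ε hε h
    exact rescaledFar_subset_rescaledBox ha ha1 hε h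
  have hG : Measurable (Gfun a) := by
    unfold Gfun
    fun_prop
  have hA : MeasurableSet {p ∈ Aset | Gfun a p ≤ 1} := by
    have h1 : MeasurableSet {p : ℝ × ℝ × ℝ × ℝ × ℝ | 0 ≤ p.1} :=
      measurableSet_le (by fun_prop) (by fun_prop)
    have h2 : MeasurableSet {p : ℝ × ℝ × ℝ × ℝ × ℝ | 0 ≤ p.2.1} :=
      measurableSet_le (by fun_prop) (by fun_prop)
    have h3 : MeasurableSet {p : ℝ × ℝ × ℝ × ℝ × ℝ | p.2.2.1 ^ 2 ≤ p.1} :=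
      measurableSet_le (by fun_prop) (by fun_prop)
    have h4 : MeasurableSet {p : ℝ × ℝ × ℝ × ℝ × ℝ | p.2.2.2.1 ^ 2 ≤ p.2.1} :=
      measurableSet_le (by fun_prop) (by fun_prop)
    exact (h1.inter (h2.inter (h3.inter h4))).inter (measurableSet_le hG measurable_const)
  have hev : ∀ᵐ p : ℝ × ℝ × ℝ × ℝ × ℝ, ∀ᶠ ε in nhdsWithin 0 (Set.Ioi 0),
      p ∈ rescaledFar a ε ↔ p ∈ {p ∈ Aset | Gfun a p ≤ 1} := by
    filter_upwards [ae_Gfun_ne_one a] with p hp using eventually_mem_rescaledFar_iff a p hp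
  have hlim := tendsto_measure_of_ae_tendsto_indicator (nhdsWithin 0 (Set.Ioi 0)) hA
    (measurableSet_rescaledFar a) (measurableSet_rescaledBox a) (volume_rescaledBox_ne_top a)
    hsub hev
  refine ⟨hlim, ne_top_of_le_ne_top (volume_rescaledBox_ne_top a) (le_of_tendsto hlim ?_)⟩
  filter_upwards [hsub] with ε h using measure_mono h

theorem prob_eq_volume_rescaledFar {a ε : ℝ} (ha : 0 < a) (hε : 0 < ε) (hε2 : ε < 2)
    {Ω : Type*} [MeasurableSpace Ω] (P : Measure Ω) [IsProbabilityMeasure P]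
    (X₁ X₂ : Ω → EuclideanSpace ℝ (Fin 3))
    (hX₁ : Measurable X₁) (hX₂ : Measurable X₂)
    (hd₁ : P.map X₁ = unifE a) (hd₂ : P.map X₂ = unifE a)
    (hindep : IndepFun X₁ X₂ P) :
    (P {ω | 2 - ‖X₁ ω - X₂ ω‖ ≤ ε}).toReal =
      9 / (32 * π) * (ε ^ 3 * √ε) * (volume (rescaledFar a ε)).toReal := by
  have hS : MeasurableSet {q : EuclideanSpace ℝ (Fin 3) × EuclideanSpace ℝ (Fin 3) |
      2 - ‖q.1 - q.2‖ ≤ ε} := measurableSet_le (by fun_prop) (by fun_prop)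
  have hjoint := (indepFun_iff_map_prod_eq_prod_map_map hX₁.aemeasurable hX₂.aemeasurable).1 hindep
  have hP : P {ω | 2 - ‖X₁ ω - X₂ ω‖ ≤ ε} = (volume (Ell a))⁻¹ * ((volume (Ell a))⁻¹ *
      (volume : Measure (EuclideanSpace ℝ (Fin 3))).prod volume (farPairs a ε)) := by
    have h1 : P {ω | 2 - ‖X₁ ω - X₂ ω‖ ≤ ε} = P.map (fun ω ↦ (X₁ ω, X₂ ω))
        {q | 2 - ‖q.1 - q.2‖ ≤ ε} := by
      rw [Measure.map_apply (hX₁.prodMk hX₂) hS]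
      rfl
    rw [h1, hjoint, hd₁, hd₂, unifE, Measure.prod_smul_left, Measure.prod_smul_right,
      Measure.smul_apply, Measure.smul_apply, Measure.prod_restrict, Measure.restrict_apply hS,
      smul_eq_mul, smul_eq_mul]
    congr 3
    ext q
    simp only [farPairs, Set.mem_inter_iff, Set.mem_ofPred_eq, Set.mem_prod]
    tauto
  rw [hP, volume_farPairs ha hε hε2, volume_Ell ha]
  simp only [ENNReal.toReal_mul, ENNReal.toReal_inv]
  rw [ENNReal.toReal_ofReal (by positivity), ENNReal.toReal_ofReal (by positivity)]
  field_simp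
  ring

/-- Sharp two-point tail: `ε^{-7/2} P(2 - ‖X₁ - X₂‖ ≤ ε) → (9/(32π)) I_a` as `ε ↓ 0`. -/
theorem stmt15 (a : ℝ) (ha : 0 < a) (ha1 : a < 1)
    {Ω : Type*} [MeasurableSpace Ω] (P : Measure Ω) [IsProbabilityMeasure P]
    (X₁ X₂ : Ω → EuclideanSpace ℝ (Fin 3))
    (hX₁ : Measurable X₁) (hX₂ : Measurable X₂)
    (hd₁ : P.map X₁ = unifE a) (hd₂ : P.map X₂ = unifE a)
    (hindep : IndepFun X₁ X₂ P) :
    Tendsto (fun ε : ℝ =>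
        ε ^ (-(7:ℝ)/2) * (P {ω | 2 - ‖X₁ ω - X₂ ω‖ ≤ ε}).toReal)
      (nhdsWithin 0 (Set.Ioi 0))
      (nhds ((9 / (32 * π)) * (volume {p ∈ Aset | Gfun a p ≤ 1}).toReal)) := by
  obtain ⟨hlim, hfin⟩ := tendsto_volume_rescaledFar ha ha1
  have hreal := ((ENNReal.tendsto_toReal hfin).comp hlim).const_mul (9 / (32 * π))
  refine hreal.congr' ?_
  filter_upwards [self_mem_nhdsWithin, nhdsWithin_le_nhds (Iio_mem_nhds (zero_lt_two' ℝ))]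
    with ε hε hε2
  have hε' : 0 < ε := hε
  rw [prob_eq_volume_rescaledFar ha hε hε2 P X₁ X₂ hX₁ hX₂ hd₁ hd₂ hindep]
  have hpow : ε ^ (-(7 : ℝ) / 2) * (ε ^ 3 * √ε) = 1 := by
    rw [Real.sqrt_eq_rpow, ← Real.rpow_natCast, ← Real.rpow_add hε', ← Real.rpow_add hε']
    norm_num
  simp only [Function.comp_apply]
  linear_combination (-(9 / (32 * π) * (volume (rescaledFar a ε)).toReal)) * hpow
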